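/- For every centrally symmetric convex body K ⊂ ℝ^{2n} (i.e. K = −K), one has c(K) ≤ π·(M*(K))². Moreover, equality holds if and only if K is a Euclidean ball centered at the origin. -/

import Mathlib

open MeasureTheory Real Set Filter intervalIntegral Metric
open scoped InnerProductSpace Topology Pointwise

noncomputable section

/-- The phase space `ℝ^{2n}`. -/
abbrev E (n : ℕ) := EuclideanSpace ℝ (Fin (2 * n))

/-- The standard complex structure `J` on `ℝ^{2n}`, given in coordinates
`(x₁,y₁,…,xₙ,yₙ)` by `J(x₁,y₁,…,xₙ,yₙ) = (−y₁,x₁,…,−yₙ,xₙ)`. -/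
def Jmap (n : ℕ) (v : E n) : E n := WithLp.toLp 2 fun i =>
  if _h : i.val % 2 = 0 then -v ⟨i.val + 1, by have := i.isLt; omega⟩
  else v ⟨i.val - 1, by have := i.isLt; omega⟩

/-- The support function `h_K(u) = sup_{x ∈ K} ⟨x, u⟩`. -/
def suppFn (n : ℕ) (K : Set (E n)) (u : E n) : ℝ :=
  sSup ((fun x => ⟪x, u⟫_ℝ) '' K)

/-- A convex body: a compact convex set with nonempty interior. -/
def IsConvexBody (n : ℕ) (K : Set (E n)) : Prop :=
  IsCompact K ∧ Convex ℝ K ∧ (interior K).Nonempty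

/-- Membership in the loop space `𝓔_p`: the pair `(z, dz)` represents an absolutely
continuous `2π`-periodic loop `z` with derivative `dz ∈ L^p([0,2π])`, mean zero and
normalized action `(1/2)∫₀^{2π} ⟨J z, ż⟩ = 1`. -/
def InE (n : ℕ) (p : ℝ) (z dz : ℝ → E n) : Prop :=
  Function.Periodic z (2 * π) ∧
  (∀ a b : ℝ, IntervalIntegrable dz volume a b) ∧
  (∀ t, z t = z 0 + ∫ s in (0:ℝ)..t, dz s) ∧
  MemLp dz (ENNReal.ofReal p) (volume.restrict (Set.Ioc (0:ℝ) (2 * π))) ∧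
  (∫ t in (0:ℝ)..(2 * π), z t) = 0 ∧
  (1 / 2) * ∫ t in (0:ℝ)..(2 * π), ⟪Jmap n (z t), dz t⟫_ℝ = 1

/-- The (Ekeland–Hofer–Zehnder) capacity of a convex body,
`c(S) = (π · inf_{z ∈ 𝓔₂} (1/2π) ∫₀^{2π} h_S(ż(t)) dt)²`. -/
def capacity (n : ℕ) (S : Set (E n)) : ℝ :=
  (π * sInf { r : ℝ | ∃ z dz : ℝ → E n, InE n 2 z dz ∧
      r = (1 / (2 * π)) * ∫ t in (0:ℝ)..(2 * π), suppFn n S (dz t) }) ^ 2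

/-- The action `𝒜(γ) = (1/2) ∫₀^{T₀} ⟨−Jγ̇(t), γ(t)⟩ dt` of a `T₀`-periodic curve. -/
def action (n : ℕ) (γ : ℝ → E n) (T₀ : ℝ) : ℝ :=
  (1 / 2) * ∫ t in (0:ℝ)..T₀, ⟪-Jmap n (deriv γ t), γ t⟫_ℝ

/-- A closed characteristic on `∂K`: a nonconstant `T₀`-periodic `C¹` curve lying on
`∂K` satisfying `γ̇ = d·J∇F(γ)` for some `d > 0`, where `F = ‖·‖_K²`. -/
def IsClosedCharacteristic (n : ℕ) (K : Set (E n)) (γ : ℝ → E n) (T₀ : ℝ) : Prop :=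
  0 < T₀ ∧ Function.Periodic γ T₀ ∧ ContDiff ℝ 1 γ ∧ (∃ s t, γ s ≠ γ t) ∧
  (∀ t, γ t ∈ frontier K) ∧
  ∃ d : ℝ, 0 < d ∧ ∀ t, deriv γ t = d • Jmap n (gradient (fun x => gauge K x ^ 2) (γ t))

/-- A capacity carrier of `K`: a closed characteristic on `∂K` of minimal action. -/
def IsCapacityCarrier (n : ℕ) (K : Set (E n)) (γ : ℝ → E n) (T₀ : ℝ) : Prop :=
  IsClosedCharacteristic n K γ T₀ ∧
  ∀ γ' T₀', IsClosedCharacteristic n K γ' T₀' → action n γ T₀ ≤ action n γ' T₀'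

/-- The minimal action of a closed characteristic on `∂K`. -/
def minAction (n : ℕ) (K : Set (E n)) : ℝ :=
  sInf { a : ℝ | ∃ γ T₀, IsClosedCharacteristic n K γ T₀ ∧ a = action n γ T₀ }

/-- `K` has smooth boundary: its gauge function is `C¹` away from the origin. -/
def HasSmoothBoundary (n : ℕ) (K : Set (E n)) : Prop :=
  ContDiffOn ℝ 1 (gauge K) {(0 : E n)}ᶜ

/-- The `p`-sum `K +ₚ T` of Firey: the convex body with support function
`(h_K^p + h_T^p)^{1/p}`. -/
def pSum (n : ℕ) (p : ℝ) (K T : Set (E n)) : Set (E n) :=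
  { x | ∀ u, ⟪x, u⟫_ℝ ≤ (suppFn n K u ^ p + suppFn n T u ^ p) ^ (1 / p) }

/-- The polar body `T° = {x : ⟨x,y⟩ ≤ 1 for all y ∈ T}`. -/
def polarBody (n : ℕ) (T : Set (E n)) : Set (E n) :=
  { x | ∀ y ∈ T, ⟪x, y⟫_ℝ ≤ 1 }

/-- The length `∫₀^{T₀} ‖γ̇(t)‖_B dt` of a curve measured with the gauge of `B`. -/
def lengthIn (n : ℕ) (B : Set (E n)) (γ : ℝ → E n) (T₀ : ℝ) : ℝ :=
  ∫ t in (0:ℝ)..T₀, gauge B (deriv γ t)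

/-- Critical point of the functional `I_p(z) = ∫₀^{2π} h_K^p(ż(t)) dt` on `𝓔_p`. -/
def IsCriticalPoint (n : ℕ) (p : ℝ) (K : Set (E n)) (z dz : ℝ → E n) : Prop :=
  ∀ ξ dξ : ℝ → E n,
    Function.Periodic ξ (2 * π) →
    (∀ a b : ℝ, IntervalIntegrable dξ volume a b) →
    (∀ t, ξ t = ξ 0 + ∫ s in (0:ℝ)..t, dξ s) →
    MemLp dξ (ENNReal.ofReal p) (volume.restrict (Set.Ioc (0:ℝ) (2 * π))) →
    (∫ t in (0:ℝ)..(2 * π), ξ t) = 0 →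
    (∫ t in (0:ℝ)..(2 * π), ⟪ξ t, Jmap n (dz t)⟫_ℝ) = 0 →
    (∫ t in (0:ℝ)..(2 * π), ⟪gradient (fun u => suppFn n K u ^ p) (dz t), dξ t⟫_ℝ) = 0

/-- The rotation-invariant probability measure on the unit sphere of `ℝ^{2n}`. -/
def sphereMeasure (n : ℕ) : Measure (sphere (0 : E n) 1) :=
  ((volume : Measure (E n)).toSphere Set.univ)⁻¹ • (volume : Measure (E n)).toSphere

/-- The mean width parameter `M*(K) = ∫_{S^{2n-1}} h_K dσ`. -/
def meanWidth (n : ℕ) (K : Set (E n)) : ℝ :=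
  ∫ x : sphere (0 : E n) 1, suppFn n K (x : E n) ∂(sphereMeasure n)

lemma byparts_real {L : ℝ} {f u e e' : ℝ → ℝ}
    (hui : IntervalIntegrable u volume 0 L)
    (hf : ∀ t, f t = f 0 + ∫ s in (0:ℝ)..t, u s)
    (he : ∀ t, HasDerivAt e (e' t) t) (hc : Continuous e') :
    (∫ t in (0:ℝ)..L, e t * u t) + (∫ t in (0:ℝ)..L, e' t * f t) = e L * f L - e 0 * f 0 := by
  have hAC : AbsolutelyContinuousOnInterval (fun x => ∫ s in (0:ℝ)..x, u s) 0 L :=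
    hui.absolutelyContinuousOnInterval_intervalIntegral (by simp)
  have hfe : f = fun t => f 0 + ∫ s in (0:ℝ)..t, u s := funext hf
  have hconst : AbsolutelyContinuousOnInterval (fun _ : ℝ => f 0) 0 L :=
    (LipschitzWith.const (f 0)).lipschitzOnWith.absolutelyContinuousOnInterval
  have hfAC : AbsolutelyContinuousOnInterval f 0 L := by
    rw [hfe]; exact hconst.add hAC
  have hde : deriv e = e' := funext fun t => (he t).deriv
  have heC : ContDiff ℝ 1 e := by
    rw [contDiff_one_iff_deriv]
    exact ⟨fun t => (he t).differentiableAt, by rw [hde]; exact hc⟩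
  have heAC : AbsolutelyContinuousOnInterval e 0 L :=
    heC.contDiffOn.absolutelyContinuousOnInterval
  have h := AbsolutelyContinuousOnInterval.integral_mul_deriv_eq_deriv_mul heAC hfAC
  rw [hde] at h
  have h2 : (∫ t in (0:ℝ)..L, e t * u t) = ∫ t in (0:ℝ)..L, e t * deriv f t := by
    apply intervalIntegral.integral_congr_ae
    filter_upwards [hui.ae_hasDerivAt_integral] with x hx hx2
    have := (hx (uIoc_subset_uIcc hx2) 0 (by simp)).const_add (f 0)
    rw [← hfe] at this
    rw [this.deriv]
  rw [h2, h]; ring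

lemma byparts_complex {L : ℝ} {f u : ℝ → ℝ} {e e' : ℝ → ℂ}
    (hui : IntervalIntegrable u volume 0 L)
    (hf : ∀ t, f t = f 0 + ∫ s in (0:ℝ)..t, u s) (hfc : Continuous f)
    (he : ∀ t, HasDerivAt e (e' t) t) (hc : Continuous e') :
    (∫ t in (0:ℝ)..L, e t * (u t : ℂ)) + (∫ t in (0:ℝ)..L, e' t * (f t : ℂ)) =
      e L * f L - e 0 * f 0 := by
  have hec : Continuous e := continuous_iff_continuousAt.2 fun t => (he t).continuousAt
  have i1 : IntervalIntegrable (fun t => e t * (u t : ℂ)) volume 0 L := by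
    have : IntervalIntegrable (fun t => (u t : ℂ)) volume 0 L :=
      ⟨hui.1.ofReal, hui.2.ofReal⟩
    exact this.continuousOn_mul hec.continuousOn
  have i2 : IntervalIntegrable (fun t => e' t * (f t : ℂ)) volume 0 L := by
    apply Continuous.intervalIntegrable; fun_prop
  have hr := byparts_real (L := L) (e := fun t => (e t).re) (e' := fun t => (e' t).re) hui hf
    (fun t => by
      have := (Complex.reCLM.hasFDerivAt.comp_hasDerivAt t (he t)); simpa [Function.comp_def] using this) (by fun_prop)
  have him := byparts_real (L := L) (e := fun t => (e t).im) (e' := fun t => (e' t).im) hui hf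
    (fun t => by
      have := (Complex.imCLM.hasFDerivAt.comp_hasDerivAt t (he t)); simpa [Function.comp_def] using this) (by fun_prop)
  have R : ∀ {g : ℝ → ℂ}, IntervalIntegrable g volume 0 L →
      (∫ t in (0:ℝ)..L, g t).re = ∫ t in (0:ℝ)..L, (g t).re := fun h =>
    (Complex.reCLM.intervalIntegral_comp_comm h).symm
  have I : ∀ {g : ℝ → ℂ}, IntervalIntegrable g volume 0 L →
      (∫ t in (0:ℝ)..L, g t).im = ∫ t in (0:ℝ)..L, (g t).im := fun h =>
    (Complex.imCLM.intervalIntegral_comp_comm h).symm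
  apply Complex.ext
  · rw [Complex.add_re, R i1, R i2]
    simpa using hr
  · rw [Complex.add_im, I i1, I i2]
    simpa using him

lemma wirtinger {L : ℝ} (hL : 0 < L) {f u : ℝ → ℝ}
    (hui : ∀ a b, IntervalIntegrable u volume a b)
    (hub : ∀ t, |u t| ≤ 1)
    (hf : ∀ t, f t = f 0 + ∫ s in (0:ℝ)..t, u s) (hfL : f L = f 0) :
    ∃ m : ℝ, (∫ t in (0:ℝ)..L, (f t - m) ^ 2) ≤ (L / (2 * π)) ^ 2 * ∫ t in (0:ℝ)..L, u t ^ 2 := by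
  have hfc : Continuous f := by
    have : f = fun t => f 0 + ∫ s in (0:ℝ)..t, u s := funext hf
    rw [this]
    exact continuous_const.add (continuous_primitive hui 0)
  set m : ℝ := L⁻¹ * ∫ t in (0:ℝ)..L, f t with hm
  refine ⟨m, ?_⟩
  set g : ℝ → ℝ := fun t => f t - m with hg
  have hgc : Continuous g := by fun_prop
  have hgu : ∀ t, g t = g 0 + ∫ s in (0:ℝ)..t, u s := fun t => by
    simp only [hg]; rw [hf t]; ring
  have hg0 : ∫ t in (0:ℝ)..L, g t = 0 := by
    simp only [hg]
    rw [intervalIntegral.integral_sub (hfc.intervalIntegrable _ _) (by simp)]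
    simp [hm]
    field_simp
    simp
  have hgL : g L = g 0 := by simp [hg, hfL]
  have mg : MemLp (fun t => (g t : ℂ)) 2 (volume.restrict (Ioc 0 L)) := by
    obtain ⟨C, hC⟩ := (isCompact_Icc (a := (0:ℝ)) (b := L)).exists_bound_of_continuousOn hgc.continuousOn
    refine MemLp.of_bound (by fun_prop) C ?_
    filter_upwards [ae_restrict_mem measurableSet_Ioc] with x hx
    simpa using hC x (Ioc_subset_Icc_self hx)
  have mu : MemLp (fun t => (u t : ℂ)) 2 (volume.restrict (Ioc 0 L)) := by
    refine MemLp.of_bound ?_ 1 (Eventually.of_forall fun t => by simpa using hub t)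
    exact (hui 0 L).1.ofReal.aestronglyMeasurable
  have S1 := hasSum_sq_fourierCoeffOn hL mg
  have S2 := hasSum_sq_fourierCoeffOn hL mu
  have key : ∀ k : ℤ, ‖fourierCoeffOn hL (fun t => (g t : ℂ)) k‖ ^ 2 ≤
      (L / (2 * π)) ^ 2 * ‖fourierCoeffOn hL (fun t => (u t : ℂ)) k‖ ^ 2 := by
    intro k
    by_cases hk : k = 0
    · subst hk
      have : fourierCoeffOn hL (fun t => (g t : ℂ)) 0 = 0 := by
        rw [fourierCoeffOn_eq_integral]
        simp only [neg_zero, fourier_zero, one_smul]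
        rw [intervalIntegral.integral_ofReal, hg0]; simp
      rw [this]; simp; positivity
    · have hb := byparts_complex (L := L) (e := fun x => fourier (-k) (x : AddCircle (L - 0)))
        (hui 0 L) hgu hgc (fun t => hasDerivAt_fourier_neg (L - 0) k t) (by
          have : Continuous fun t : ℝ => (fourier (-k) (t : AddCircle (L-0)) : ℂ) :=
            (fourier (-k)).continuous.comp (AddCircle.continuous_mk' _)
          fun_prop)
      have e1 : (fourier (-k) ((L : ℝ) : AddCircle (L - 0)) : ℂ) = fourier (-k) ((0 : ℝ) : AddCircle (L-0)) := by
        congr 1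
        simp
      have hz : (fourier (-k) ((L : ℝ) : AddCircle (L - 0)) : ℂ) * (g L : ℂ) - fourier (-k) ((0 : ℝ) : AddCircle (L-0)) * (g 0 : ℂ) = 0 := by
        rw [e1, hgL, sub_self]
      rw [hz] at hb
      have hrel : fourierCoeffOn hL (fun t => (u t : ℂ)) k =
          (2 * π * Complex.I * k / L) * fourierCoeffOn hL (fun t => (g t : ℂ)) k := by
        rw [fourierCoeffOn_eq_integral, fourierCoeffOn_eq_integral]
        simp only [smul_eq_mul, mul_assoc] at hb ⊢
        rw [intervalIntegral.integral_const_mul] at hb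
        rw [eq_neg_of_add_eq_zero_left hb]
        simp only [Complex.real_smul]
        push_cast
        simp
        ring
      rw [hrel, norm_mul, mul_pow]
      have : ‖(2 * π * Complex.I * k / L : ℂ)‖ = 2 * π * |(k:ℝ)| / L := by
        simp [abs_of_pos pi_pos, abs_of_pos hL]
      rw [this, ← mul_assoc]
      have hk1 : (1:ℝ) ≤ |(k:ℝ)| := by
        exact_mod_cast Int.one_le_abs hk
      have : (1:ℝ) ≤ (L / (2 * π)) ^ 2 * (2 * π * |(k:ℝ)| / L) ^ 2 := by
        rw [← mul_pow]
        have : L / (2 * π) * (2 * π * |(k:ℝ)| / L) = |(k:ℝ)| := by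
          field_simp
        rw [this]; exact one_le_pow₀ hk1
      exact le_mul_of_one_le_left (sq_nonneg _) this
  have := hasSum_le key S1 (S2.mul_left ((L / (2 * π)) ^ 2))
  simp only [sub_zero, smul_eq_mul, Complex.norm_real, Real.norm_eq_abs, sq_abs] at this
  have h3 : L⁻¹ * (∫ t in (0:ℝ)..L, g t ^ 2) ≤ L⁻¹ * ((L / (2 * π)) ^ 2 * ∫ t in (0:ℝ)..L, u t ^ 2) := by
    linarith
  exact le_of_mul_le_mul_left h3 (by positivity)

/-- The coordinate swap underlying `Jmap`. -/
def swapJ (n : ℕ) (i : Fin (2 * n)) : Fin (2 * n) :=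
  if _h : i.val % 2 = 0 then ⟨i.val + 1, by have := i.isLt; omega⟩
  else ⟨i.val - 1, by have := i.isLt; omega⟩

lemma swapJ_invol (n : ℕ) : Function.Involutive (swapJ n) := by
  intro i
  apply Fin.ext
  unfold swapJ
  by_cases h : i.val % 2 = 0
  · have h' : ¬ (i.val + 1) % 2 = 0 := by omega
    simp [h, h']
  · have h' : (i.val - 1) % 2 = 0 := by omega
    simp [h, h']; omega

lemma Jmap_apply (n : ℕ) (v : E n) (i : Fin (2 * n)) :
    Jmap n v i = (if i.val % 2 = 0 then (-1 : ℝ) else 1) * v (swapJ n i) := by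
  unfold Jmap swapJ
  by_cases h : i.val % 2 = 0 <;> simp [h]

lemma Jmap_add (n : ℕ) (v w : E n) : Jmap n (v + w) = Jmap n v + Jmap n w := by
  ext i; simp [Jmap_apply, mul_add]

lemma Jmap_smul (n : ℕ) (c : ℝ) (v : E n) : Jmap n (c • v) = c • Jmap n v := by
  ext i; simp [Jmap_apply]; try ring

lemma Jmap_Jmap (n : ℕ) (v : E n) : Jmap n (Jmap n v) = -v := by
  ext i
  rw [Jmap_apply, Jmap_apply, swapJ_invol n i]
  unfold swapJ
  by_cases h : i.val % 2 = 0
  · have h' : ¬ (i.val + 1) % 2 = 0 := by omega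
    simp [h, h']
  · have h' : (i.val - 1) % 2 = 0 := by omega
    simp [h, h']

lemma inner_Jmap_Jmap (n : ℕ) (v w : E n) : ⟪Jmap n v, Jmap n w⟫_ℝ = ⟪v, w⟫_ℝ := by
  simp only [PiLp.inner_apply, Jmap_apply]
  rw [← Equiv.sum_comp (swapJ_invol n).toPerm (fun i => ⟪v i, w i⟫_ℝ)]
  refine Finset.sum_congr rfl fun i _ => ?_
  by_cases h : i.val % 2 = 0 <;> simp [h]

lemma inner_Jmap_left (n : ℕ) (v w : E n) : ⟪Jmap n v, w⟫_ℝ = -⟪v, Jmap n w⟫_ℝ := by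
  rw [← inner_Jmap_Jmap n (Jmap n v) w, Jmap_Jmap]; simp

lemma inner_Jmap_self (n : ℕ) (v : E n) : ⟪Jmap n v, v⟫_ℝ = 0 := by
  have := inner_Jmap_left n v v
  rw [real_inner_comm v] at this
  rw [real_inner_comm]
  linarith

lemma norm_Jmap (n : ℕ) (v : E n) : ‖Jmap n v‖ = ‖v‖ := by
  have := inner_Jmap_Jmap n v v
  rw [real_inner_self_eq_norm_sq, real_inner_self_eq_norm_sq] at this
  exact (sq_eq_sq₀ (norm_nonneg _) (norm_nonneg _)).1 this

/-- `J` as a continuous linear map. -/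
noncomputable def JL (n : ℕ) : E n →L[ℝ] E n :=
  LinearMap.toContinuousLinearMap
    { toFun := Jmap n
      map_add' := Jmap_add n
      map_smul' := Jmap_smul n }

lemma JL_apply (n : ℕ) (v : E n) : JL n v = Jmap n v := rfl

lemma continuous_Jmap (n : ℕ) : Continuous (Jmap n) := (JL n).continuous

lemma Jmap_sub (n : ℕ) (v w : E n) : Jmap n (v - w) = Jmap n v - Jmap n w := (JL n).map_sub v w

/-- Isoperimetric inequality for curves of speed at most one. -/
lemma isoper_lip {n : ℕ} {L : ℝ} (hL : 0 < L) {w u : ℝ → E n}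
    (hui : ∀ a b, IntervalIntegrable u volume a b) (hub : ∀ t, ‖u t‖ ≤ 1)
    (hw : ∀ t, w t = w 0 + ∫ s in (0:ℝ)..t, u s) (hwL : w L = w 0) :
    (∫ t in (0:ℝ)..L, ⟪Jmap n (w t), u t⟫_ℝ) ≤ L ^ 2 / (2 * π) := by
  have hwc : Continuous w := by
    have : w = fun t => w 0 + ∫ s in (0:ℝ)..t, u s := funext hw
    rw [this]
    exact continuous_const.add (continuous_primitive hui 0)
  have P : ∀ i : Fin (2*n), ∀ v : E n, (EuclideanSpace.proj i : E n →L[ℝ] ℝ) v = v i := fun i v => rfl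
  have huii : ∀ i a b, IntervalIntegrable (fun t => u t i) volume a b := fun i a b => by
    have := hui a b
    exact ⟨(EuclideanSpace.proj i : E n →L[ℝ] ℝ).integrable_comp this.1, (EuclideanSpace.proj i : E n →L[ℝ] ℝ).integrable_comp this.2⟩
  have hInt0 : ∀ i a b, (∫ s in a..b, u s) i = ∫ s in a..b, u s i := fun i a b =>
    ((EuclideanSpace.proj i : E n →L[ℝ] ℝ).intervalIntegral_comp_comm (hui a b)).symm
  have hW : ∀ i : Fin (2*n), ∃ m : ℝ, (∫ t in (0:ℝ)..L, (w t i - m) ^ 2) ≤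
      (L / (2 * π)) ^ 2 * ∫ t in (0:ℝ)..L, u t i ^ 2 := fun i => by
    refine wirtinger hL (huii i) (fun t => ?_) (fun t => ?_) (by rw [hwL])
    · exact (PiLp.norm_apply_le (u t) i).trans (hub t)
    · rw [← hInt0, hw t]; rfl
  choose m hm using hW
  let M : E n := WithLp.toLp 2 m
  have hu2 : ∀ i, IntervalIntegrable (fun t => u t i ^ 2) volume 0 L := fun i => by
    refine IntervalIntegrable.mono_fun (g := fun t => u t i ^ 2) (f := fun _ => (1:ℝ)) (by simp) ?_ ?_
    · exact ((huii i 0 L).def'.aestronglyMeasurable.pow 2)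
    · refine Eventually.of_forall fun t => ?_
      have : |u t i| ≤ 1 := (PiLp.norm_apply_le (u t) i).trans (hub t)
      simpa using this
  have hu2s : ∀ t, ‖u t‖ ^ 2 = ∑ i, u t i ^ 2 := fun t => by
    rw [EuclideanSpace.norm_sq_eq]; simp
  have hw2s : ∀ t, ‖w t - M‖ ^ 2 = ∑ i, (w t i - m i) ^ 2 := fun t => by
    rw [EuclideanSpace.norm_sq_eq]; simp [M]
  have hwci : ∀ i, Continuous fun t => w t i := fun i =>
    (EuclideanSpace.proj i : E n →L[ℝ] ℝ).continuous.comp hwc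
  have A1 : (∫ t in (0:ℝ)..L, ‖w t - M‖ ^ 2) ≤ (L / (2 * π)) ^ 2 * ∫ t in (0:ℝ)..L, ‖u t‖ ^ 2 := by
    simp only [hu2s, hw2s]
    rw [intervalIntegral.integral_finsetSum fun i _ => hu2 i,
      intervalIntegral.integral_finsetSum fun i _ => by
        apply Continuous.intervalIntegrable
        have := hwci i
        fun_prop, Finset.mul_sum]
    exact Finset.sum_le_sum fun i _ => hm i
  have hu2i : IntervalIntegrable (fun t => ‖u t‖ ^ 2) volume 0 L := by
    simp only [hu2s]
    have h2 : (fun t => ∑ i, u t i ^ 2) = ∑ i, fun t => u t i ^ 2 := by ext t; simp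
    rw [h2]
    exact IntervalIntegrable.sum Finset.univ fun i _ => hu2 i
  have A2 : (∫ t in (0:ℝ)..L, ‖u t‖ ^ 2) ≤ L := by
    have : (∫ t in (0:ℝ)..L, ‖u t‖ ^ 2) ≤ ∫ t in (0:ℝ)..L, (1:ℝ) := by
      refine integral_mono_on hL.le hu2i (by simp) fun t _ => ?_
      exact pow_le_one₀ (norm_nonneg _) (hub t)
    simpa using this
  have hu0 : (∫ s in (0:ℝ)..L, u s) = 0 := by
    have := hw L; rw [hwL] at this; simpa using this
  have iJ : ∀ {g : ℝ → E n}, Continuous g → IntervalIntegrable (fun t => ⟪Jmap n (g t), u t⟫_ℝ) volume 0 L := by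
    intro g hg
    have hJg : Continuous fun t => Jmap n (g t) := (continuous_Jmap n).comp hg
    refine IntervalIntegrable.mono_fun (f := fun t => ‖g t‖) (hg.norm.intervalIntegrable _ _) ?_ ?_
    · exact (hJg.aestronglyMeasurable).inner (hui 0 L).def'.aestronglyMeasurable
    · refine Eventually.of_forall fun t => ?_
      simp only [norm_norm]
      refine (norm_inner_le_norm _ _).trans ?_
      rw [norm_Jmap]
      exact mul_le_of_le_one_right (norm_nonneg _) (hub t)
  have A3 : (∫ t in (0:ℝ)..L, ⟪Jmap n (w t), u t⟫_ℝ) = ∫ t in (0:ℝ)..L, ⟪Jmap n (w t - M), u t⟫_ℝ := by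
    have : (∫ t in (0:ℝ)..L, ⟪Jmap n M, u t⟫_ℝ) = 0 := by
      have := (innerSL ℝ (Jmap n M)).intervalIntegral_comp_comm (hui 0 L)
      rw [hu0] at this
      simpa using this
    simp only [Jmap_sub, inner_sub_left]
    rw [intervalIntegral.integral_sub (iJ hwc) (iJ continuous_const), this, sub_zero]
  have A4 : (∫ t in (0:ℝ)..L, ⟪Jmap n (w t - M), u t⟫_ℝ) ≤
      ∫ t in (0:ℝ)..L, ((π / L) * ‖w t - M‖ ^ 2 + (L / (4 * π)) * ‖u t‖ ^ 2) := by
    refine integral_mono_on hL.le (iJ (by fun_prop)) ?_ fun t _ => ?_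
    · refine IntervalIntegrable.add ?_ (hu2i.const_mul _)
      apply Continuous.intervalIntegrable; fun_prop
    · refine (real_inner_le_norm _ _).trans ?_
      rw [norm_Jmap]
      have h1 : 0 ≤ (π / L) * (‖w t - M‖ - L / (2 * π) * ‖u t‖) ^ 2 := by positivity
      have h2 : (π / L) * (‖w t - M‖ - L / (2 * π) * ‖u t‖) ^ 2 =
        (π / L) * ‖w t - M‖ ^ 2 + (L / (4 * π)) * ‖u t‖ ^ 2 - ‖w t - M‖ * ‖u t‖ := by
        field_simp; ring
      linarith
  rw [intervalIntegral.integral_add (by apply Continuous.intervalIntegrable; fun_prop) (hu2i.const_mul _),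
    intervalIntegral.integral_const_mul, intervalIntegral.integral_const_mul] at A4
  rw [A3]
  refine A4.trans ?_
  calc _ ≤ π / L * ((L / (2 * π)) ^ 2 * ∫ t in (0:ℝ)..L, ‖u t‖ ^ 2) + L / (4 * π) * ∫ t in (0:ℝ)..L, ‖u t‖ ^ 2 := by
        gcongr
    _ = L / (2 * π) * ∫ t in (0:ℝ)..L, ‖u t‖ ^ 2 := by field_simp; ring
    _ ≤ L / (2 * π) * L := by gcongr
    _ = _ := by ring

/-- Change of variables along the primitive of a density bounded below. -/
lemma exists_reparam {ρ : ℝ → ℝ} {ε : ℝ} (hε : 0 < ε) (hρ : ∀ t, ε ≤ ρ t)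
    (hi : ∀ a b, IntervalIntegrable ρ volume a b) :
    ∃ s : ℝ ≃o ℝ, (∀ t, s t = ∫ x in (0:ℝ)..t, ρ x) ∧
      MeasurePreserving s (volume.withDensity fun t => ENNReal.ofReal (ρ t)) volume := by
  set S : ℝ → ℝ := fun t => ∫ x in (0:ℝ)..t, ρ x with hS
  have hdiff : ∀ a b, S b - S a = ∫ x in a..b, ρ x := fun a b =>
    integral_interval_sub_left (hi _ _) (hi _ _)
  have hlow : ∀ a b, a ≤ b → ε * (b - a) ≤ S b - S a := fun a b hab => by
    rw [hdiff]
    have : (∫ x in a..b, ε) ≤ ∫ x in a..b, ρ x :=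
      integral_mono_on hab (by simp) (hi _ _) fun t _ => hρ t
    simp at this
    linarith
  have hmono : StrictMono S := fun a b hab => by
    have := hlow a b hab.le
    nlinarith [mul_pos hε (sub_pos.2 hab)]
  have hcont : Continuous S := continuous_primitive hi 0
  have S0 : S 0 = 0 := by simp [hS]
  have htop : Tendsto S atTop atTop := by
    refine tendsto_atTop_mono' _ ?_ (tendsto_id.const_mul_atTop hε)
    filter_upwards [eventually_ge_atTop 0] with t ht
    have := hlow 0 t ht
    simp [S0] at this; simpa using this
  have hbot : Tendsto S atBot atBot := by
    refine tendsto_atBot_mono' _ ?_ (tendsto_id.const_mul_atBot hε)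
    filter_upwards [eventually_le_atBot 0] with t ht
    have := hlow t 0 ht
    simp [S0] at this; simp; linarith
  have hsurj : Function.Surjective S := hcont.surjective htop hbot
  refine ⟨hmono.orderIsoOfSurjective S hsurj, fun t => rfl, ?_⟩
  change MeasurePreserving S _ _
  refine ⟨hcont.measurable, ?_⟩
  symm
  refine Real.measure_ext_Ioo_rat fun p q => ?_
  rw [Measure.map_apply hcont.measurable measurableSet_Ioo]
  obtain ⟨a, ha⟩ := hsurj p
  obtain ⟨b, hb⟩ := hsurj q
  rw [← ha, ← hb]
  have hpre : S ⁻¹' Ioo (S a) (S b) = Ioo a b := by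
    ext t; simp [hmono.lt_iff_lt]
  rw [hpre, withDensity_apply _ measurableSet_Ioo, Real.volume_Ioo]
  rcases le_total a b with hab | hab
  · rw [Measure.restrict_congr_set Ioo_ae_eq_Ioc, hdiff, integral_of_le hab,
      ofReal_integral_eq_lintegral_ofReal (hi a b).1]
    exact Eventually.of_forall fun t => hε.le.trans (hρ t)
  · rw [Ioo_eq_empty (not_lt.2 hab)]
    simp [ENNReal.ofReal_eq_zero, hmono.monotone hab]

lemma isoper {n : ℕ} {z dz : ℝ → E n} (hper : Function.Periodic z (2 * π))
    (hdz : ∀ a b : ℝ, IntervalIntegrable dz volume a b)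
    (hz : ∀ t, z t = z 0 + ∫ s in (0:ℝ)..t, dz s) :
    (∫ t in (0:ℝ)..(2 * π), ⟪Jmap n (z t), dz t⟫_ℝ) ≤
      (∫ t in (0:ℝ)..(2 * π), ‖dz t‖) ^ 2 / (2 * π) := by
  have key : ∀ ε : ℝ, 0 < ε → (∫ t in (0:ℝ)..(2 * π), ⟪Jmap n (z t), dz t⟫_ℝ) ≤
      ((∫ t in (0:ℝ)..(2 * π), ‖dz t‖) + 2 * π * ε) ^ 2 / (2 * π) := by
    intro ε hε
    set ρ : ℝ → ℝ := fun t => ‖dz t‖ + ε with hρ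
    have hρi : ∀ a b, IntervalIntegrable ρ volume a b := fun a b => (hdz a b).norm.add (by simp)
    have hρ0 : ∀ t, 0 < ρ t := fun t => by positivity
    obtain ⟨s, hs, hmp⟩ := exists_reparam hε (fun t => by simp [hρ]) hρi
    have hemb : MeasurableEmbedding s := s.toHomeomorph.measurableEmbedding
    have hs0 : s 0 = 0 := by simp [hs]
    have hsL : s (2 * π) = (∫ t in (0:ℝ)..(2 * π), ‖dz t‖) + 2 * π * ε := by
      rw [hs, hρ, intervalIntegral.integral_add (hdz _ _).norm (by simp)]; simp
    set L := s (2 * π) with hLdef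
    have hL : 0 < L := by rw [← hs0]; exact s.strictMono (by positivity)
    have hdzm : AEStronglyMeasurable dz volume := by
      have : LocallyIntegrable dz volume := fun x =>
        ⟨Ioc (x - 1) (x + 1), Ioc_mem_nhds (by linarith) (by linarith), (hdz _ _).1⟩
      exact this.aestronglyMeasurable
    have hρae : AEMeasurable ρ volume := by
      exact (hdzm.norm.aemeasurable).add_const _
    have cv : ∀ {F : Type} [NormedAddCommGroup F] [NormedSpace ℝ F] (g : ℝ → F) (a b : ℝ),
        a ≤ b → ∫ x in (s a)..(s b), g x = ∫ t in a..b, ρ t • g (s t) := by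
      intro F _ _ g a b hab
      rw [integral_of_le (s.monotone hab), integral_of_le hab]
      rw [← hmp.setIntegral_preimage_emb hemb]
      have : s ⁻¹' Ioc (s a) (s b) = Ioc a b := by ext t; simp
      rw [this, restrict_withDensity measurableSet_Ioc,
        integral_withDensity_eq_integral_toReal_smul₀ hρae.restrict.ennreal_ofReal (by simp)]
      refine integral_congr_ae (Eventually.of_forall fun t => ?_)
      simp [ENNReal.toReal_ofReal (hρ0 t).le]
    set w : ℝ → E n := fun x => z (s.symm x) with hw
    set u : ℝ → E n := fun x => (ρ (s.symm x))⁻¹ • dz (s.symm x) with hu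
    have hub : ∀ x, ‖u x‖ ≤ 1 := fun x => by
      simp only [hu, norm_smul, norm_inv, Real.norm_eq_abs, abs_of_pos (hρ0 _)]
      rw [inv_mul_le_one₀ (hρ0 _)]
      simp [hρ, hε.le]
    have hcomp : u ∘ s = fun t => (ρ t)⁻¹ • dz t := by ext1 t; simp [hu]
    have hum : AEStronglyMeasurable u volume := by
      rw [← hmp.aestronglyMeasurable_comp_iff hemb, hcomp]
      refine AEStronglyMeasurable.mono_ac (withDensity_absolutelyContinuous _ _) ?_
      exact hρae.inv.aestronglyMeasurable.smul hdzm
    have hui : ∀ a b, IntervalIntegrable u volume a b := fun a b => by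
      refine IntervalIntegrable.mono_fun (f := fun _ => (1:ℝ)) (by simp) hum.restrict ?_
      exact Eventually.of_forall fun t => by simpa using hub t
    have hprim : ∀ a b, a ≤ b → ∫ x in (s a)..(s b), u x = ∫ t in a..b, dz t := fun a b hab => by
      rw [cv u a b hab]
      refine integral_congr fun t _ => ?_
      simp [hu, smul_smul, (hρ0 t).ne']
    have hprim' : ∀ a b, ∫ x in (s a)..(s b), u x = ∫ t in a..b, dz t := fun a b => by
      rcases le_total a b with h | h
      · exact hprim a b h
      · rw [integral_symm, hprim b a h, ← integral_symm]
    have hs0' : s.symm 0 = 0 := by rw [OrderIso.symm_apply_eq, hs0]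
    have hww : ∀ x, w x = w 0 + ∫ y in (0:ℝ)..x, u y := fun x => by
      have := hprim' 0 (s.symm x)
      rw [hs0, OrderIso.apply_symm_apply] at this
      rw [this]
      simp only [hw, hs0']
      exact hz _
    have hwL : w L = w 0 := by
      simp only [hw, hs0', hLdef, OrderIso.symm_apply_apply]
      have := hper 0; simpa using this
    have fin := isoper_lip hL hui hub hww hwL
    have e : (∫ x in (0:ℝ)..L, ⟪Jmap n (w x), u x⟫_ℝ) = ∫ t in (0:ℝ)..(2 * π), ⟪Jmap n (z t), dz t⟫_ℝ := by
      have := cv (fun x => ⟪Jmap n (w x), u x⟫_ℝ) 0 (2 * π) (by positivity)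
      rw [hs0] at this
      rw [this]
      refine integral_congr fun t _ => ?_
      simp only [hw, hu, OrderIso.symm_apply_apply, inner_smul_right, smul_eq_mul]
      rw [mul_inv_cancel_left₀ (hρ0 t).ne']
    rw [e, hsL] at fin
    exact fin
  have hlim : Tendsto (fun ε : ℝ => ((∫ t in (0:ℝ)..(2 * π), ‖dz t‖) + 2 * π * ε) ^ 2 / (2 * π)) (𝓝[>] 0)
      (𝓝 (((∫ t in (0:ℝ)..(2 * π), ‖dz t‖) + 2 * π * 0) ^ 2 / (2 * π))) := by
    apply Tendsto.mono_left _ nhdsWithin_le_nhds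
    apply Continuous.tendsto; fun_prop
  have := ge_of_tendsto hlim (by filter_upwards [self_mem_nhdsWithin] with ε hε using key ε hε)
  simpa using this

section supp
variable {n : ℕ} {K : Set (E n)}

lemma suppFn_continuous (hK : IsCompact K) : Continuous (suppFn n K) := by
  unfold suppFn
  have : Continuous (Function.uncurry (fun (u x : E n) => ⟪x, u⟫_ℝ)) := by
    simp only [Function.uncurry_def]; fun_prop
  exact hK.continuous_sSup this

lemma suppFn_bdd (hK : IsCompact K) (u : E n) : BddAbove ((fun x => ⟪x, u⟫_ℝ) '' K) :=
  hK.bddAbove_image (by fun_prop)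

lemma inner_le_suppFn (hK : IsCompact K) {x : E n} (hx : x ∈ K) (u : E n) :
    ⟪x, u⟫_ℝ ≤ suppFn n K u :=
  le_csSup (suppFn_bdd hK u) (mem_image_of_mem _ hx)

lemma suppFn_smul {c : ℝ} (hc : 0 ≤ c) (u : E n) : suppFn n K (c • u) = c * suppFn n K u := by
  unfold suppFn
  have h : (fun x => ⟪x, c • u⟫_ℝ) '' K = c • ((fun x => ⟪x, u⟫_ℝ) '' K) := by
    rw [← image_smul, image_image]
    simp [inner_smul_right]
  rw [h, Real.sSup_smul_of_nonneg hc, smul_eq_mul]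

lemma suppFn_neg (hsym : K = -K) (u : E n) : suppFn n K (-u) = suppFn n K u := by
  unfold suppFn
  conv_lhs => rw [hsym]
  rw [← Set.image_neg_eq_neg, image_image]
  simp

lemma zero_mem_of_sym (hc : Convex ℝ K) (hne : K.Nonempty) (hsym : K = -K) : (0 : E n) ∈ K := by
  obtain ⟨x, hx⟩ := hne
  have hx' : -x ∈ K := by rw [hsym]; simpa using hx
  have := hc hx hx' (a := 1/2) (b := 1/2) (by norm_num) (by norm_num) (by norm_num)
  simpa using this

lemma suppFn_nonneg (hK : IsCompact K) (h0 : (0 : E n) ∈ K) (u : E n) : 0 ≤ suppFn n K u := by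
  simpa using inner_le_suppFn hK h0 u

lemma suppFn_closedBall {r : ℝ} (hr : 0 ≤ r) (u : E n) :
    suppFn n (closedBall 0 r) u = r * ‖u‖ := by
  have hKc : IsCompact (closedBall (0 : E n) r) := isCompact_closedBall _ _
  apply le_antisymm
  · refine csSup_le ((nonempty_closedBall.2 hr).image _) ?_
    rintro _ ⟨x, hx, rfl⟩
    refine (real_inner_le_norm _ _).trans ?_
    have : ‖x‖ ≤ r := by simpa using hx
    gcongr
  · by_cases hu : u = 0
    · subst hu; simpa using suppFn_nonneg hKc (by simpa using hr) (0 : E n)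
    · have hu' : 0 < ‖u‖ := norm_pos_iff.2 hu
      have hx : (r / ‖u‖) • u ∈ closedBall (0 : E n) r := by
        simp [norm_smul, abs_of_nonneg hr, hu'.ne']
      have := inner_le_suppFn hKc hx u
      rw [real_inner_smul_left, real_inner_self_eq_norm_sq] at this
      have e : r / ‖u‖ * ‖u‖ ^ 2 = r * ‖u‖ := by field_simp
      rwa [e] at this

lemma eq_closedBall_of_suppFn (hK : IsCompact K) (hc : Convex ℝ K) (hne : K.Nonempty) {r : ℝ}
    (hr : 0 ≤ r) (h : ∀ u, suppFn n K u = r * ‖u‖) : K = closedBall 0 r := by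
  apply Subset.antisymm
  · intro x hx
    have := inner_le_suppFn hK hx x
    rw [h, real_inner_self_eq_norm_sq] at this
    by_contra hcon
    have : r < ‖x‖ := by simpa using hcon
    nlinarith [norm_nonneg x]
  · intro x hx
    by_contra hxK
    obtain ⟨f, c, hf, hfx⟩ := geometric_hahn_banach_closed_point hc hK.isClosed hxK
    set y := (InnerProductSpace.toDual ℝ (E n)).symm f with hy
    have hfy : ∀ v, f v = ⟪v, y⟫_ℝ := fun v => by
      rw [real_inner_comm, hy, InnerProductSpace.toDual_symm_apply]
    have h1 : suppFn n K y ≤ c := by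
      refine csSup_le (hne.image _) ?_
      rintro _ ⟨v, hv, rfl⟩
      simp only [← hfy]
      exact (hf v hv).le
    rw [h] at h1
    have h2 := real_inner_le_norm x y
    rw [← hfy] at h2
    have : ‖x‖ ≤ r := by simpa using hx
    nlinarith [norm_nonneg y, mul_le_mul_of_nonneg_right this (norm_nonneg y)]

lemma suppFn_pos (hK : IsConvexBody n K) (hsym : K = -K) {u : E n} (hu : u ≠ 0) :
    0 < suppFn n K u := by
  obtain ⟨hKc, hc, x, hx⟩ := hK
  have hx' : x ∈ K := interior_subset hx
  have hnx : -x ∈ K := by rw [hsym]; simpa using hx'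
  have ht : Tendsto (fun t : ℝ => x + t • u) (𝓝[>] 0) (𝓝 x) := by
    have : Tendsto (fun t : ℝ => x + t • u) (𝓝 0) (𝓝 (x + (0:ℝ) • u)) := by
      apply Continuous.tendsto; fun_prop
    simp at this
    exact this.mono_left nhdsWithin_le_nhds
  have hev := ht.eventually (mem_interior_iff_mem_nhds.1 hx)
  obtain ⟨t, htK, ht0⟩ := (hev.and self_mem_nhdsWithin).exists
  have h1 := inner_le_suppFn hKc htK u
  have h2 := inner_le_suppFn hKc hnx u
  rw [inner_add_left, real_inner_smul_left, real_inner_self_eq_norm_sq] at h1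
  rw [inner_neg_left] at h2
  have : 0 < t * ‖u‖ ^ 2 := mul_pos ht0 (by have := norm_pos_iff.2 hu; positivity)
  linarith

end supp

/-- The rotation `e^{Jt}`. -/
noncomputable def rot (n : ℕ) (t : ℝ) (v : E n) : E n := cos t • v + sin t • Jmap n v

lemma norm_rot (n : ℕ) (t : ℝ) (v : E n) : ‖rot n t v‖ = ‖v‖ := by
  have : ‖rot n t v‖ ^ 2 = ‖v‖ ^ 2 := by
    unfold rot
    rw [norm_add_sq_real, real_inner_smul_left, real_inner_smul_right, real_inner_comm,
      inner_Jmap_self, norm_smul, norm_smul, norm_Jmap, mul_pow, mul_pow]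
    simp only [Real.norm_eq_abs, sq_abs]
    have := sin_sq_add_cos_sq t
    linear_combination ‖v‖ ^ 2 * this
  exact (sq_eq_sq₀ (norm_nonneg _) (norm_nonneg _)).1 this

noncomputable def rotL (n : ℕ) (t : ℝ) : E n ≃ₗᵢ[ℝ] E n :=
  LinearIsometry.toLinearIsometryEquiv
    { toFun := rot n t
      map_add' := fun v w => by simp only [rot, Jmap_add, smul_add]; abel
      map_smul' := fun c v => by
        simp only [rot, Jmap_smul, smul_add, smul_smul, RingHom.id_apply, mul_comm]
      norm_map' := norm_rot n t } rfl

lemma rotL_apply (n : ℕ) (t : ℝ) (v : E n) : rotL n t v = rot n t v := rfl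

lemma integral_toSphere_comp {n : ℕ} (R : E n ≃ₗᵢ[ℝ] E n) (g : E n → ℝ) :
    ∫ x : sphere (0 : E n) 1, g (R x) ∂(volume : Measure (E n)).toSphere =
    ∫ x : sphere (0 : E n) 1, g x ∂(volume : Measure (E n)).toSphere := by
  let φ : sphere (0 : E n) 1 ≃ₜ sphere (0 : E n) 1 :=
    R.toHomeomorph.subtype (fun x => by simp)
  have hφ : ∀ x, (φ x : E n) = R x := fun x => rfl
  have hmp : MeasurePreserving φ (volume : Measure (E n)).toSphere (volume : Measure (E n)).toSphere := by
    refine ⟨φ.measurable, ?_⟩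
    ext s hs
    rw [Measure.map_apply φ.measurable hs, Measure.toSphere_apply' _ hs,
      Measure.toSphere_apply' _ (φ.measurable hs)]
    congr 1
    rw [← R.measurePreserving.measure_preimage_emb R.toHomeomorph.measurableEmbedding
      (Ioo (0:ℝ) 1 • ((fun y : sphere (0 : E n) 1 => (y : E n)) '' s))]
    congr 1
    ext x
    simp only [mem_preimage, Set.mem_smul]
    constructor
    · rintro ⟨a, ha, _, ⟨y, hy, rfl⟩, rfl⟩
      exact ⟨a, ha, _, ⟨φ y, hy, rfl⟩, (map_smul R a (y : E n)).symm⟩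
    · rintro ⟨a, ha, _, ⟨y, hy, rfl⟩, hx⟩
      refine ⟨a, ha, _, ⟨φ.symm y, by simpa using hy, rfl⟩, ?_⟩
      apply R.injective
      rw [map_smul, ← hφ, φ.apply_symm_apply, hx]
  exact hmp.integral_comp φ.measurableEmbedding (fun x : sphere (0 : E n) 1 => g x)

lemma integral_sphere_comp {n : ℕ} (R : E n ≃ₗᵢ[ℝ] E n) (g : E n → ℝ) :
    ∫ x : sphere (0 : E n) 1, g (R x) ∂(sphereMeasure n) =
    ∫ x : sphere (0 : E n) 1, g x ∂(sphereMeasure n) := by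
  unfold sphereMeasure
  rw [MeasureTheory.integral_smul_measure, MeasureTheory.integral_smul_measure, integral_toSphere_comp]

lemma nontrivial_E {n : ℕ} (hn : 0 < n) : Nontrivial (E n) := by
  have : Nonempty (Fin (2 * n)) := ⟨⟨0, by omega⟩⟩
  infer_instance

lemma sphereMeasure_prob {n : ℕ} (hn : 0 < n) : IsProbabilityMeasure (sphereMeasure n) := by
  have := nontrivial_E hn
  constructor
  unfold sphereMeasure
  rw [Measure.smul_apply, smul_eq_mul, ENNReal.inv_mul_cancel]
  · rw [Ne, Measure.measure_univ_eq_zero]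
    exact Measure.toSphere_ne_zero _
  · exact measure_ne_top _ _

lemma sphereMeasure_openPos {n : ℕ} : (sphereMeasure n).IsOpenPosMeasure := by
  unfold sphereMeasure
  refine Measure.IsOpenPosMeasure.mk fun U hU hne => ?_
  rw [Measure.smul_apply, smul_eq_mul]
  exact mul_ne_zero (ENNReal.inv_ne_zero.2 (measure_ne_top _ _)) (hU.measure_ne_zero _ hne)

lemma average_rot {n : ℕ} (hn : 0 < n) {h : E n → ℝ} (hc : Continuous h) :
    Continuous (fun v : E n => ∫ t in (0:ℝ)..(2 * π), h (rot n t v)) ∧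
    ∫ v : sphere (0 : E n) 1, (∫ t in (0:ℝ)..(2 * π), h (rot n t v)) ∂(sphereMeasure n) =
      2 * π * ∫ v : sphere (0 : E n) 1, h v ∂(sphereMeasure n) := by
  have := sphereMeasure_prob hn
  have hrc : Continuous fun p : E n × ℝ => h (rot n p.2 p.1) := by
    unfold rot
    have := continuous_Jmap n
    fun_prop
  refine ⟨intervalIntegral.continuous_parametric_intervalIntegral_of_continuous' hrc _ _, ?_⟩
  have h2 : (0:ℝ) ≤ 2 * π := by positivity
  simp only [integral_of_le h2]
  rw [integral_integral_swap]
  · have : ∀ t, ∫ v : sphere (0 : E n) 1, h (rot n t v) ∂(sphereMeasure n) =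
      ∫ v : sphere (0 : E n) 1, h v ∂(sphereMeasure n) := fun t => integral_sphere_comp (rotL n t) h
    simp [this, pi_pos.le]
  · obtain ⟨C, hC⟩ := (isCompact_sphere (0 : E n) 1).exists_bound_of_continuousOn hc.continuousOn
    have hJ : Continuous fun p : sphere (0 : E n) 1 × ℝ => Jmap n (p.1 : E n) :=
      (continuous_Jmap n).comp (continuous_subtype_val.comp continuous_fst)
    have hr : Continuous fun p : sphere (0 : E n) 1 × ℝ => rot n p.2 (p.1 : E n) := by
      unfold rot
      exact ((continuous_cos.comp continuous_snd).smul (continuous_subtype_val.comp continuous_fst)).add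
        ((continuous_sin.comp continuous_snd).smul hJ)
    have hq2 : Continuous fun p : sphere (0 : E n) 1 × ℝ => h (rot n p.2 (p.1 : E n)) :=
      hc.comp hr
    change Integrable (fun p : sphere (0 : E n) 1 × ℝ => h (rot n p.2 (p.1 : E n))) _
    refine Integrable.of_bound (C := C) ?_ (Eventually.of_forall ?_)
    · exact hq2.aestronglyMeasurable
    · rintro ⟨v, t⟩
      refine hC (rot n t v) ?_
      rw [mem_sphere_zero_iff_norm, norm_rot]
      exact mem_sphere_zero_iff_norm.1 v.2

/-- The infimum appearing in the capacity. -/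
noncomputable def infE (n : ℕ) (S : Set (E n)) : ℝ :=
  sInf { r : ℝ | ∃ z dz : ℝ → E n, InE n 2 z dz ∧
      r = (1 / (2 * π)) * ∫ t in (0:ℝ)..(2 * π), suppFn n S (dz t) }

lemma capacity_eq (n : ℕ) (S : Set (E n)) : capacity n S = (π * infE n S) ^ 2 := rfl

section loops
variable {n : ℕ} {K : Set (E n)}

lemma valset_nonneg (hK : IsCompact K) (h0 : (0 : E n) ∈ K) :
    ∀ r ∈ { r : ℝ | ∃ z dz : ℝ → E n, InE n 2 z dz ∧
      r = (1 / (2 * π)) * ∫ t in (0:ℝ)..(2 * π), suppFn n K (dz t) }, 0 ≤ r := by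
  rintro _ ⟨z, dz, _, rfl⟩
  refine mul_nonneg (by positivity) ?_
  exact integral_nonneg (by positivity) fun t _ => suppFn_nonneg hK h0 _

lemma infE_nonneg (hK : IsCompact K) (h0 : (0 : E n) ∈ K) : 0 ≤ infE n K :=
  Real.sInf_nonneg (valset_nonneg hK h0)

lemma exists_loop {dz : ℝ → E n} (hc : Continuous dz) (hper : Function.Periodic dz (2 * π))
    (hInt0 : ∫ t in (0:ℝ)..(2 * π), dz t = 0) {a : ℝ} (ha : 0 < a)
    (hact : (∫ t in (0:ℝ)..(2 * π), ⟪Jmap n (∫ s in (0:ℝ)..t, dz s), dz t⟫_ℝ) = 2 * a) :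
    ∃ z, InE n 2 z (fun t => (√a)⁻¹ • dz t) := by
  set Z : ℝ → E n := fun t => ∫ s in (0:ℝ)..t, dz s with hZ
  have hii : ∀ x y, IntervalIntegrable dz volume x y := fun x y => hc.intervalIntegrable _ _
  have hZc : Continuous Z := continuous_primitive hii 0
  set M : E n := (2 * π)⁻¹ • ∫ t in (0:ℝ)..(2 * π), Z t with hM
  have hJc := continuous_Jmap n
  have hdc : Continuous fun t => (√a)⁻¹ • dz t := by fun_prop
  refine ⟨fun t => (√a)⁻¹ • (Z t - M), ?_, ?_, ?_, ?_, ?_, ?_⟩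
  · intro t
    have : Z (t + 2 * π) = Z t := by
      simp only [hZ]
      rw [← integral_add_adjacent_intervals (hii 0 t) (hii t _)]
      rw [hper.intervalIntegral_add_eq t 0]
      simp [hInt0]
    simp [this]
  · exact fun x y => hdc.intervalIntegrable _ _
  · intro t
    have : Z 0 = 0 := by simp [hZ]
    beta_reduce
    rw [intervalIntegral.integral_smul, this, zero_sub, ← smul_add]
    congr 1
    simp only [hZ]; abel
  · obtain ⟨C, hC⟩ := (isCompact_Icc (a := (0:ℝ)) (b := 2 * π)).exists_bound_of_continuousOn hdc.continuousOn
    refine MemLp.of_bound hdc.aestronglyMeasurable C ?_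
    filter_upwards [ae_restrict_mem measurableSet_Ioc] with x hx
    exact hC x (Ioc_subset_Icc_self hx)
  · rw [intervalIntegral.integral_smul, intervalIntegral.integral_sub (hZc.intervalIntegrable _ _) (by simp)]
    have : (2 * π) ≠ 0 := by positivity
    simp only [intervalIntegral.integral_const, sub_zero, hM, smul_smul, mul_inv_cancel₀ this, one_smul, sub_self,
      smul_zero]
  · have hJM : (∫ t in (0:ℝ)..(2 * π), ⟪Jmap n M, dz t⟫_ℝ) = 0 := by
      have := (innerSL ℝ (Jmap n M)).intervalIntegral_comp_comm (hii 0 (2 * π))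
      rw [hInt0] at this
      simpa using this
    have e : ∀ t, ⟪Jmap n ((√a)⁻¹ • (Z t - M)), (√a)⁻¹ • dz t⟫_ℝ =
        a⁻¹ * (⟪Jmap n (Z t), dz t⟫_ℝ - ⟪Jmap n M, dz t⟫_ℝ) := fun t => by
      rw [Jmap_smul, Jmap_sub, real_inner_smul_left, real_inner_smul_right, inner_sub_left, ← mul_assoc,
        ← mul_inv, Real.mul_self_sqrt ha.le]
    simp only [e]
    rw [intervalIntegral.integral_const_mul, intervalIntegral.integral_sub, hJM, hact]
    · field_simp; simp
    · apply Continuous.intervalIntegrable; fun_prop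
    · apply Continuous.intervalIntegrable; fun_prop

lemma infE_le (hK : IsCompact K) (h0 : (0 : E n) ∈ K)
    {dz : ℝ → E n} (hc : Continuous dz) (hper : Function.Periodic dz (2 * π))
    (hInt0 : ∫ t in (0:ℝ)..(2 * π), dz t = 0) {a : ℝ} (ha : 0 < a)
    (hact : (∫ t in (0:ℝ)..(2 * π), ⟪Jmap n (∫ s in (0:ℝ)..t, dz s), dz t⟫_ℝ) = 2 * a) :
    infE n K * √a ≤ (1 / (2 * π)) * ∫ t in (0:ℝ)..(2 * π), suppFn n K (dz t) := by
  obtain ⟨z, hz⟩ := exists_loop hc hper hInt0 ha hact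
  have : infE n K ≤ (1 / (2 * π)) * ∫ t in (0:ℝ)..(2 * π), suppFn n K ((√a)⁻¹ • dz t) :=
    csInf_le ⟨0, valset_nonneg hK h0⟩ ⟨z, _, hz, rfl⟩
  have hsq : 0 < √a := Real.sqrt_pos.2 ha
  simp only [suppFn_smul (inv_nonneg.2 hsq.le), intervalIntegral.integral_const_mul] at this
  calc _ ≤ _ := mul_le_mul_of_nonneg_right this hsq.le
    _ = _ := by field_simp

lemma integral_antiper {F : Type} [NormedAddCommGroup F] [NormedSpace ℝ F] {q : ℝ → F}
    (hc : Continuous q) (hq : ∀ t, q (t + π) = -q t) : ∫ t in (0:ℝ)..(2 * π), q t = 0 := by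
  rw [← integral_add_adjacent_intervals (hc.intervalIntegrable 0 π) (hc.intervalIntegrable π (2 * π))]
  have : ∫ t in (0:ℝ)..π, q (t + π) = ∫ t in π..(2 * π), q t := by
    rw [intervalIntegral.integral_comp_add_right]; congr 1 <;> ring
  rw [← this]
  simp [hq]

lemma rot_add_pi (t : ℝ) (v : E n) : rot n (t + π) v = -rot n t v := by
  simp [rot, cos_add_pi, sin_add_pi]; abel

lemma continuous_rot (v : E n) : Continuous fun t => rot n t v := by
  unfold rot; fun_prop

lemma integral_rot (v : E n) (t : ℝ) :
    ∫ s in (0:ℝ)..t, rot n s v = sin t • v + (1 - cos t) • Jmap n v := by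
  unfold rot
  rw [intervalIntegral.integral_add, intervalIntegral.integral_smul_const,
    intervalIntegral.integral_smul_const]
  · simp
  · apply Continuous.intervalIntegrable; fun_prop
  · apply Continuous.intervalIntegrable; fun_prop

lemma Jmap_Z0 (v : E n) (t : ℝ) :
    Jmap n (sin t • v + (1 - cos t) • Jmap n v) = rot n t v - v := by
  rw [Jmap_add, Jmap_smul, Jmap_smul, Jmap_Jmap, rot]
  module

lemma inner_rot_self {v : E n} (hv : ‖v‖ = 1) (t : ℝ) : ⟪v, rot n t v⟫_ℝ = cos t := by
  rw [rot, inner_add_right, real_inner_smul_right, real_inner_smul_right, real_inner_comm,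
    real_inner_comm (Jmap n v), inner_Jmap_self, real_inner_self_eq_norm_sq, hv]
  simp

lemma inner_JZ0 {v : E n} (hv : ‖v‖ = 1) (t : ℝ) :
    ⟪Jmap n (sin t • v + (1 - cos t) • Jmap n v), rot n t v⟫_ℝ = 1 - cos t := by
  rw [Jmap_Z0, inner_sub_left, real_inner_self_eq_norm_sq, norm_rot, hv, inner_rot_self hv]
  simp

/-- The action of the perturbed circle. -/
lemma action_perturb {v : E n} (hv : ‖v‖ = 1) {φ : ℝ → ℝ} (hφ : Continuous φ)
    (hφπ : ∀ t, φ (t + π) = φ t) (hφ0 : ∫ t in (0:ℝ)..(2 * π), φ t = 0) :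
    ∃ B : ℝ, ∀ ε : ℝ, (∫ t in (0:ℝ)..(2 * π),
      ⟪Jmap n (∫ s in (0:ℝ)..t, (1 + ε * φ s) • rot n s v), (1 + ε * φ t) • rot n t v⟫_ℝ) =
      2 * (π + ε ^ 2 * B) := by
  have hr := continuous_rot v
  have hJc := continuous_Jmap n
  set ξ' : ℝ → E n := fun t => φ t • rot n t v with hξ'
  have hξ'c : Continuous ξ' := by fun_prop
  set Ξ : ℝ → E n := fun t => ∫ s in (0:ℝ)..t, ξ' s with hΞ
  have hΞd : ∀ t, HasDerivAt Ξ (ξ' t) t := fun t =>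
    integral_hasDerivAt_right (hξ'c.intervalIntegrable _ _)
      (hξ'c.stronglyMeasurableAtFilter _ _) hξ'c.continuousAt
  have hΞc : Continuous Ξ := continuous_iff_continuousAt.2 fun t => (hΞd t).continuousAt
  set Z : ℝ → E n := fun t => sin t • v + (1 - cos t) • Jmap n v with hZ
  have hZc : Continuous Z := by fun_prop
  have hZd : ∀ t, HasDerivAt Z (rot n t v) t := fun t => by
    have h1 := (hasDerivAt_sin t).smul_const v
    have h2 := ((hasDerivAt_cos t).const_sub 1).smul_const (Jmap n v)
    have := h1.add h2
    rw [neg_neg] at this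
    exact this
  have hprim : ∀ ε t, ∫ s in (0:ℝ)..t, (1 + ε * φ s) • rot n s v = Z t + ε • Ξ t := fun ε t => by
    simp only [add_smul, one_smul, mul_smul]
    rw [intervalIntegral.integral_add, integral_rot, intervalIntegral.integral_smul]
    · exact hr.intervalIntegrable _ _
    · apply Continuous.intervalIntegrable; fun_prop
  have hcos : ∫ t in (0:ℝ)..(2 * π), φ t * (1 - cos t) = 0 := by
    have h1 : ∫ t in (0:ℝ)..(2 * π), φ t * cos t = 0 :=
      integral_antiper (by fun_prop) fun t => by rw [hφπ, cos_add_pi]; ring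
    simp only [mul_sub, mul_one]
    rw [intervalIntegral.integral_sub (hφ.intervalIntegrable _ _) (by apply Continuous.intervalIntegrable; fun_prop), h1, hφ0, sub_zero]
  have c1 : ∫ t in (0:ℝ)..(2 * π), ⟪Jmap n (Z t), ξ' t⟫_ℝ = 0 := by
    refine Eq.trans ?_ hcos
    refine integral_congr fun t _ => ?_
    simp only [hξ', real_inner_smul_right, hZ, inner_JZ0 hv]
  have c0 : ∫ t in (0:ℝ)..(2 * π), ⟪Jmap n (Z t), rot n t v⟫_ℝ = 2 * π := by
    simp only [hZ, inner_JZ0 hv]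
    rw [intervalIntegral.integral_sub (by simp) (by apply Continuous.intervalIntegrable; fun_prop)]
    simp
  have c2 : ∫ t in (0:ℝ)..(2 * π), ⟪Jmap n (Ξ t), rot n t v⟫_ℝ = 0 := by
    have hd : ∀ t, HasDerivAt (fun t => ⟪Jmap n (Ξ t), Z t⟫_ℝ)
        (⟪Jmap n (Ξ t), rot n t v⟫_ℝ + ⟪Jmap n (ξ' t), Z t⟫_ℝ) t := fun t => by
      have hJ : HasDerivAt (fun t => Jmap n (Ξ t)) (Jmap n (ξ' t)) t :=
        (JL n).hasFDerivAt.comp_hasDerivAt t (hΞd t)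
      exact hJ.inner ℝ (hZd t)
    have hI := integral_eq_sub_of_hasDerivAt (a := 0) (b := 2 * π) (fun t _ => hd t)
      (by apply Continuous.intervalIntegrable; fun_prop)
    have z1 : Z (2 * π) = 0 := by simp [hZ]
    have z0 : Z 0 = 0 := by simp [hZ]
    rw [z1, z0, intervalIntegral.integral_add (by apply Continuous.intervalIntegrable; fun_prop)
      (by apply Continuous.intervalIntegrable; fun_prop)] at hI
    have : ∫ t in (0:ℝ)..(2 * π), ⟪Jmap n (ξ' t), Z t⟫_ℝ = 0 := by
      have : ∀ t, ⟪Jmap n (ξ' t), Z t⟫_ℝ = -⟪Jmap n (Z t), ξ' t⟫_ℝ := fun t => by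
        rw [inner_Jmap_left, real_inner_comm]
      simp [this, c1]
    rw [this] at hI
    simpa using hI
  refine ⟨(1/2) * ∫ t in (0:ℝ)..(2 * π), ⟪Jmap n (Ξ t), ξ' t⟫_ℝ, fun ε => ?_⟩
  simp only [hprim]
  have e : ∀ t, ⟪Jmap n (Z t + ε • Ξ t), (1 + ε * φ t) • rot n t v⟫_ℝ =
      (⟪Jmap n (Z t), rot n t v⟫_ℝ + ε * ⟪Jmap n (Z t), ξ' t⟫_ℝ) +
      (ε * ⟪Jmap n (Ξ t), rot n t v⟫_ℝ + ε ^ 2 * ⟪Jmap n (Ξ t), ξ' t⟫_ℝ) := fun t => by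
    simp only [hξ', Jmap_add, Jmap_smul, inner_add_left, real_inner_smul_left, real_inner_smul_right]
    ring
  simp only [e]
  rw [intervalIntegral.integral_add, intervalIntegral.integral_add, intervalIntegral.integral_add,
    intervalIntegral.integral_const_mul, intervalIntegral.integral_const_mul,
    intervalIntegral.integral_const_mul, c0, c1, c2]
  · ring
  all_goals (apply Continuous.intervalIntegrable; fun_prop)

/-- Lower bound on `∫ h` over perturbed circles. -/
lemma perturb_bound (hK : IsCompact K) (h0 : (0 : E n) ∈ K)
    {v : E n} (hv : ‖v‖ = 1) {φ : ℝ → ℝ} (hφ : Continuous φ)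
    (hφπ : ∀ t, φ (t + π) = φ t) (hφ0 : ∫ t in (0:ℝ)..(2 * π), φ t = 0) :
    ∃ B : ℝ, ∀ ε : ℝ, (∀ t, 0 ≤ 1 + ε * φ t) → 0 < π + ε ^ 2 * B →
      infE n K * √(π + ε ^ 2 * B) ≤
        (1 / (2 * π)) * ∫ t in (0:ℝ)..(2 * π), (1 + ε * φ t) * suppFn n K (rot n t v) := by
  obtain ⟨B, hB⟩ := action_perturb hv hφ hφπ hφ0
  refine ⟨B, fun ε h1 h2 => ?_⟩
  have hr := continuous_rot v
  have hanti : ∀ t, (1 + ε * φ (t + π)) • rot n (t + π) v = -((1 + ε * φ t) • rot n t v) := fun t => by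
    rw [hφπ, rot_add_pi, smul_neg]
  have hc : Continuous fun t => (1 + ε * φ t) • rot n t v := by fun_prop
  have := infE_le hK h0 hc (fun t => by
    have e : t + 2 * π = (t + π) + π := by ring
    simp only [e]
    rw [hanti, hanti, neg_neg]) (integral_antiper hc hanti) h2 (hB ε)
  simpa only [suppFn_smul (h1 _)] using this

lemma circle_bound (hK : IsCompact K) (h0 : (0 : E n) ∈ K) {v : E n} (hv : ‖v‖ = 1) :
    infE n K * √π ≤ (1 / (2 * π)) * ∫ t in (0:ℝ)..(2 * π), suppFn n K (rot n t v) := by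
  obtain ⟨B, hB⟩ := perturb_bound hK h0 hv (φ := fun _ => 0) continuous_const (fun _ => rfl) (by simp)
  simpa using hB 0 (by simp) (by simpa using pi_pos)

/-- The upper bound. -/
lemma infE_le_meanWidth (hn : 0 < n) (hK : IsCompact K) (h0 : (0 : E n) ∈ K) :
    infE n K * √π ≤ meanWidth n K := by
  have hP := sphereMeasure_prob hn
  obtain ⟨hc, hav⟩ := average_rot hn (suppFn_continuous hK)
  have h1 : ∫ _v : sphere (0 : E n) 1, 2 * π * (infE n K * √π) ∂(sphereMeasure n) ≤
      ∫ v : sphere (0 : E n) 1, (∫ t in (0:ℝ)..(2 * π), suppFn n K (rot n t v)) ∂(sphereMeasure n) := by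
    refine integral_mono (integrable_const _) ?_ fun v => ?_
    · exact (hc.comp continuous_subtype_val).integrable_of_hasCompactSupport
        (HasCompactSupport.of_compactSpace _)
    · have := circle_bound hK h0 (mem_sphere_zero_iff_norm.1 v.2)
      have hp : (0:ℝ) < 2 * π := by positivity
      rw [one_div, ← div_eq_inv_mul, le_div_iff₀ hp] at this
      linarith
  rw [hav] at h1
  simp only [MeasureTheory.integral_const, smul_eq_mul, probReal_univ, one_mul] at h1
  exact le_of_mul_le_mul_left h1 (by positivity)

/-- Equality forces the support function to be constant on the sphere. -/
lemma const_of_eq (hn : 0 < n) (hK : IsConvexBody n K) (hsym : K = -K)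
    (heq : infE n K * √π = meanWidth n K) :
    0 < meanWidth n K ∧ ∀ v : E n, ‖v‖ = 1 → suppFn n K v = meanWidth n K := by
  have hKc := hK.1
  have h0 : (0 : E n) ∈ K := zero_mem_of_sym hK.2.1 (hK.2.2.mono interior_subset) hsym
  have hP := sphereMeasure_prob hn
  have hO := sphereMeasure_openPos (n := n)
  have hhc := suppFn_continuous hKc
  obtain ⟨hc, hav⟩ := average_rot hn hhc
  have hp : (0:ℝ) < 2 * π := by positivity
  set M := meanWidth n K with hM
  set G : E n → ℝ := fun v => ∫ t in (0:ℝ)..(2 * π), suppFn n K (rot n t v) with hG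
  have hGM : ∀ v : E n, ‖v‖ = 1 → G v = 2 * π * M := by
    have hcs : Continuous fun v : sphere (0 : E n) 1 => G v - 2 * π * M :=
      (hc.comp continuous_subtype_val).sub continuous_const
    have hnn : ∀ v : sphere (0 : E n) 1, 0 ≤ G v - 2 * π * M := fun v => by
      have := circle_bound hKc h0 (mem_sphere_zero_iff_norm.1 v.2)
      rw [heq, one_div, ← div_eq_inv_mul, le_div_iff₀ hp] at this
      simp only [hG]
      linarith
    have hInt0 : ∫ v : sphere (0 : E n) 1, (G v - 2 * π * M) ∂(sphereMeasure n) = 0 := by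
      rw [MeasureTheory.integral_sub ?_ (integrable_const _)]
      · simp only [hG] at hav ⊢
        rw [hav]; simp [hM, meanWidth]
      · exact (hc.comp continuous_subtype_val).integrable_of_hasCompactSupport
          (HasCompactSupport.of_compactSpace _)
    have hae : (fun v : sphere (0 : E n) 1 => G v - 2 * π * M) =ᵐ[sphereMeasure n]
        (fun _ => (0:ℝ)) := (integral_eq_zero_iff_of_nonneg (fun v => hnn v)
      (hcs.integrable_of_hasCompactSupport (HasCompactSupport.of_compactSpace _))).1 hInt0
    have hev := (Continuous.ae_eq_iff_eq (sphereMeasure n) hcs continuous_const).1 hae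
    intro v hv
    have : G v - 2 * π * M = 0 := congrFun hev ⟨v, mem_sphere_zero_iff_norm.2 hv⟩
    linarith
  have hgc : ∀ v : E n, Continuous fun t => suppFn n K (rot n t v) := fun v =>
    hhc.comp (continuous_rot v)
  have hMpos : 0 < M := by
    have := nontrivial_E hn
    obtain ⟨v, hv⟩ := exists_norm_eq (E n) (zero_le_one (α := ℝ))
    have h1 := hGM v hv
    have h2 : 0 < G v := by
      refine intervalIntegral_pos_of_pos ((hgc v).intervalIntegrable _ _) (fun t => ?_) hp
      refine suppFn_pos hK hsym ?_
      rw [← norm_ne_zero_iff, norm_rot, hv]; norm_num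
    rw [h1] at h2
    exact pos_of_mul_pos_right h2 hp.le
  refine ⟨hMpos, fun v hv => ?_⟩
  set g : ℝ → ℝ := fun t => suppFn n K (rot n t v) with hg
  have hgcv : Continuous g := hgc v
  set φ : ℝ → ℝ := fun t => g t - M with hφ
  have hφc : Continuous φ := by fun_prop
  have hφπ : ∀ t, φ (t + π) = φ t := fun t => by
    simp only [hφ, hg, rot_add_pi, suppFn_neg hsym]
  have hg0 : ∫ t in (0:ℝ)..(2 * π), g t = 2 * π * M := hGM v hv
  have hφ0 : ∫ t in (0:ℝ)..(2 * π), φ t = 0 := by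
    simp only [hφ]
    rw [intervalIntegral.integral_sub (hgcv.intervalIntegrable _ _) (by simp), hg0]; simp
  obtain ⟨B, hB⟩ := perturb_bound hKc h0 hv hφc hφπ hφ0
  set Q := (1 / (2 * π)) * ∫ t in (0:ℝ)..(2 * π), φ t ^ 2 with hQ
  have hval : ∀ ε : ℝ, (1 / (2 * π)) * ∫ t in (0:ℝ)..(2 * π), (1 + ε * φ t) * g t = M + ε * Q := by
    intro ε
    have e : ∀ t, (1 + ε * φ t) * g t = g t + (ε * φ t ^ 2 + (ε * M) * φ t) := fun t => by
      simp only [hφ]; ring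
    simp only [e]
    rw [intervalIntegral.integral_add, intervalIntegral.integral_add, intervalIntegral.integral_const_mul,
      intervalIntegral.integral_const_mul, hg0, hφ0, hQ]
    · field_simp; try ring
    all_goals (apply Continuous.intervalIntegrable; fun_prop)
  obtain ⟨C, hC⟩ : ∃ C : ℝ, ∀ t, |φ t| ≤ C := by
    obtain ⟨C, hC⟩ := (isCompact_sphere (0 : E n) 1).exists_bound_of_continuousOn
      (f := fun w => suppFn n K w - M) (by fun_prop)
    exact ⟨C, fun t => hC (rot n t v) (mem_sphere_zero_iff_norm.2 (by rw [norm_rot, hv]))⟩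
  have hev : ∀ᶠ δ : ℝ in 𝓝[>] 0, 2 * M * Q ≤ δ * (Q ^ 2 - M ^ 2 * B / π) := by
    have t1 : ∀ᶠ δ : ℝ in 𝓝[>] 0, δ * C < 1 := by
      apply Filter.Eventually.filter_mono nhdsWithin_le_nhds
      have : ContinuousAt (fun δ : ℝ => δ * C) 0 := by fun_prop
      exact this.eventually_lt continuousAt_const (by simp)
    have t2 : ∀ᶠ δ : ℝ in 𝓝[>] 0, 0 < π + δ ^ 2 * B := by
      apply Filter.Eventually.filter_mono nhdsWithin_le_nhds
      have : ContinuousAt (fun δ : ℝ => π + δ ^ 2 * B) 0 := by fun_prop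
      exact continuousAt_const.eventually_lt this (by simp [pi_pos])
    filter_upwards [t1, t2, self_mem_nhdsWithin] with δ h1 h2 h3
    have hδ : 0 < δ := h3
    have hb := hB (-δ) (fun t => by
      have := hC t
      have h4 := (abs_le.1 this).2
      nlinarith) (by simpa using h2)
    simp only [neg_sq] at hb
    rw [hval] at hb
    have hm : infE n K = M / √π := by
      rw [← heq]; field_simp
    rw [hm] at hb
    have hl : 0 ≤ M / √π * √(π + δ ^ 2 * B) := by positivity
    have hsq := pow_le_pow_left₀ hl hb 2
    rw [mul_pow, div_pow, Real.sq_sqrt pi_pos.le, Real.sq_sqrt h2.le] at hsq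
    have e : M ^ 2 / π * (π + δ ^ 2 * B) = M ^ 2 + δ ^ 2 * (M ^ 2 * B / π) := by field_simp
    rw [e] at hsq
    have : δ * (2 * M * Q) ≤ δ * (δ * (Q ^ 2 - M ^ 2 * B / π)) := by nlinarith
    exact le_of_mul_le_mul_left this hδ
  have hQ0 : 2 * M * Q ≤ 0 := by
    have hlim : Tendsto (fun δ : ℝ => δ * (Q ^ 2 - M ^ 2 * B / π)) (𝓝[>] 0) (𝓝 (0 * (Q ^ 2 - M ^ 2 * B / π))) := by
      apply Tendsto.mono_left _ nhdsWithin_le_nhds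
      apply Continuous.tendsto; fun_prop
    have := ge_of_tendsto hlim hev
    simpa using this
  have hφz : φ 0 = 0 := by
    by_contra hne
    have hpos : 0 < ∫ t in (0:ℝ)..(2 * π), φ t ^ 2 :=
      intervalIntegral.integral_pos hp (by fun_prop) (fun t _ => sq_nonneg _)
        ⟨0, by simp [pi_pos.le], by positivity⟩
    have : 0 < Q := by positivity
    have : 0 < 2 * M * Q := by positivity
    linarith
  have : g 0 = M := by simp only [hφ] at hφz; linarith
  simpa [hg, rot] using this

end loops

lemma main_pos {n : ℕ} (hn : 0 < n) (K : Set (E n))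
    (hK : IsConvexBody n K) (hsym : K = -K) :
    capacity n K ≤ π * meanWidth n K ^ 2 ∧
    (capacity n K = π * meanWidth n K ^ 2 ↔
      ∃ r : ℝ, 0 < r ∧ K = Metric.closedBall (0 : E n) r) := by
  have hKc := hK.1
  have hne : K.Nonempty := hK.2.2.mono interior_subset
  have h0 : (0 : E n) ∈ K := zero_mem_of_sym hK.2.1 hne hsym
  have hi0 := infE_nonneg hKc h0
  have hub := infE_le_meanWidth hn hKc h0
  have hcap : capacity n K = π * (infE n K * √π) ^ 2 := by
    rw [capacity_eq, mul_pow, mul_pow, Real.sq_sqrt pi_pos.le]; ring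
  have hl : 0 ≤ infE n K * √π := by positivity
  have hle : capacity n K ≤ π * meanWidth n K ^ 2 := by
    rw [hcap]; gcongr
  refine ⟨hle, ?_, ?_⟩
  · intro h
    rw [hcap] at h
    have h1 := mul_left_cancel₀ pi_ne_zero h
    have heq := (sq_eq_sq₀ hl (hl.trans hub)).1 h1
    obtain ⟨hM, hconst⟩ := const_of_eq hn hK hsym heq
    refine ⟨_, hM, eq_closedBall_of_suppFn hKc hK.2.1 hne hM.le fun u => ?_⟩
    by_cases hu : u = 0
    · subst hu
      have := suppFn_smul (K := K) (le_refl (0:ℝ)) (0 : E n)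
      simpa using this
    · have hu' : ‖u‖ ≠ 0 := norm_ne_zero_iff.2 hu
      have h2 := hconst (‖u‖⁻¹ • u) (by simp [norm_smul, hu'])
      rw [suppFn_smul (by positivity)] at h2
      rw [← h2]; field_simp
  · rintro ⟨r, hr, hKr⟩
    refine le_antisymm hle ?_
    have hP := sphereMeasure_prob hn
    have hMr : meanWidth n K = r := by
      have : ∀ x : sphere (0 : E n) 1, suppFn n K (x : E n) = r := fun x => by
        rw [hKr, suppFn_closedBall hr.le, mem_sphere_zero_iff_norm.1 x.2, mul_one]
      simp [meanWidth, this]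
    have hlow : r / √π ≤ infE n K := by
      refine le_csInf ?_ ?_
      · have := nontrivial_E hn
        obtain ⟨v, hv⟩ := exists_norm_eq (E n) (zero_le_one (α := ℝ))
        obtain ⟨B, hB⟩ := action_perturb hv (φ := fun _ => 0) continuous_const (fun _ => rfl) (by simp)
        have hB0 := hB 0
        simp only [mul_zero, add_zero, one_smul, ne_eq, OfNat.ofNat_ne_zero, not_false_eq_true,
          zero_pow, zero_mul] at hB0
        obtain ⟨z, hz⟩ := exists_loop (continuous_rot v) (fun t => by
          have e : t + 2 * π = (t + π) + π := by ring
          rw [e, rot_add_pi, rot_add_pi, neg_neg])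
          (integral_antiper (continuous_rot v) fun t => rot_add_pi t v) pi_pos hB0
        exact ⟨_, z, _, hz, rfl⟩
      · rintro _ ⟨z, dz, ⟨hper, hdz, hz, _, _, hact⟩, rfl⟩
        have hiso := isoper hper hdz hz
        have hL0 : 0 ≤ ∫ t in (0:ℝ)..(2 * π), ‖dz t‖ :=
          integral_nonneg (by positivity) fun t _ => norm_nonneg _
        simp only [hKr, suppFn_closedBall hr.le, intervalIntegral.integral_const_mul]
        set A := ∫ t in (0:ℝ)..(2 * π), ⟪Jmap n (z t), dz t⟫_ℝ
        set L := ∫ t in (0:ℝ)..(2 * π), ‖dz t‖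
        have hA : A = 2 := by linarith
        rw [hA, le_div_iff₀ (by positivity)] at hiso
        have hL : 2 * √π ≤ L := by
          refine le_of_sq_le_sq ?_ hL0
          rw [mul_pow, Real.sq_sqrt pi_pos.le]; linarith
        have hsp : 0 < √π := Real.sqrt_pos.2 pi_pos
        calc r / √π = 1 / (2 * π) * (r * (2 * √π)) := by
              have := Real.mul_self_sqrt pi_pos.le
              field_simp
              nlinarith
          _ ≤ _ := by gcongr
    rw [hcap, hMr]
    rw [div_le_iff₀ (by positivity)] at hlow
    gcongr

lemma main_zero (K : Set (E 0)) (hK : IsConvexBody 0 K) :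
    capacity 0 K ≤ π * meanWidth 0 K ^ 2 ∧
    (capacity 0 K = π * meanWidth 0 K ^ 2 ↔
      ∃ r : ℝ, 0 < r ∧ K = Metric.closedBall (0 : E 0) r) := by
  have hsub : Subsingleton (E 0) := by
    have : IsEmpty (Fin (2 * 0)) := by simpa using Fin.isEmpty
    infer_instance
  have h1 : capacity 0 K = 0 := by
    have : { r : ℝ | ∃ z dz : ℝ → E 0, InE 0 2 z dz ∧
      r = (1 / (2 * π)) * ∫ t in (0:ℝ)..(2 * π), suppFn 0 K (dz t) } = ∅ := by
      ext r
      simp only [mem_setOf_eq, mem_empty_iff_false, iff_false]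
      rintro ⟨z, dz, ⟨_, _, _, _, _, h⟩, _⟩
      have : ∀ t, ⟪Jmap 0 (z t), dz t⟫_ℝ = 0 := fun t => by
        rw [Subsingleton.elim (dz t) 0, inner_zero_right]
      simp [this] at h
    unfold capacity
    rw [this]; simp
  have h2 : meanWidth 0 K = 0 := by
    have : IsEmpty (sphere (0 : E 0) 1) := ⟨fun x => by
      have := mem_sphere_zero_iff_norm.1 x.2
      rw [Subsingleton.elim (x : E 0) 0] at this
      simp at this⟩
    unfold meanWidth
    exact integral_of_isEmpty
  rw [h1, h2]
  refine ⟨by simp, fun _ => ⟨1, one_pos, ?_⟩, fun _ => by simp⟩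
  obtain ⟨x, hx⟩ := hK.2.2
  ext y
  rw [Subsingleton.elim y x]
  simp only [interior_subset hx, true_iff]
  rw [Subsingleton.elim x 0]
  simp

/-- For every centrally symmetric convex body `K ⊂ ℝ^{2n}`, `c(K) ≤ π·(M*(K))²`, with
equality iff `K` is a Euclidean ball centered at the origin. -/
theorem capacity_le_pi_meanWidth_sq (n : ℕ) (K : Set (E n))
    (hK : IsConvexBody n K) (hsym : K = -K) :
    capacity n K ≤ π * meanWidth n K ^ 2 ∧
    (capacity n K = π * meanWidth n K ^ 2 ↔
      ∃ r : ℝ, 0 < r ∧ K = Metric.closedBall (0 : E n) r) := by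
  rcases Nat.eq_zero_or_pos n with rfl | hn
  · exact main_zero K hK
  · exact main_pos hn K hK hsym
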